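/- Suppose the DMC admits inputs x₀, x₁ ∈ 𝒳 and an output y* ∈ 𝒴 with Γ_{Y|X}(y*|x₀) > 0 and Γ_{Y|X}(y*|x₁) = 0. Then for every ε ∈ [0,1), the Stein-exponent with sublinear channel uses equals θ*_sublin(ε) = min{ D(π_{UV} ‖ Q_{UV}) : π_{UV} a pmf on 𝒰×𝒱 with marginals π_U = P_U and π_V = P_V }. -/

import Mathlib

open Filter

/-- Base-2 Kullback–Leibler divergence between two pmfs on a finite alphabet. -/
noncomputable def klDiv2 {A : Type} [Fintype A] (p q : A → ℝ) : ℝ :=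
  ∑ a, p a * Real.logb 2 (p a / q a)

/-- `p` is a probability mass function on the finite alphabet `A`. -/
def IsPMF {A : Type} [Fintype A] (p : A → ℝ) : Prop :=
  (∀ a, 0 ≤ p a) ∧ ∑ a, p a = 1

/-- `𝒰`-marginal of a joint pmf on `U × V`. -/
noncomputable def margU {U V : Type} [Fintype U] [Fintype V] (p : U × V → ℝ) (u : U) : ℝ :=
  ∑ v, p (u, v)

/-- `𝒱`-marginal of a joint pmf on `U × V`. -/
noncomputable def margV {U V : Type} [Fintype U] [Fintype V] (p : U × V → ℝ) (v : V) : ℝ :=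
  ∑ u, p (u, v)

/-- Probability, under source law `R` (i.i.d. over `n` samples) and DMC `Γ`
(memoryless over `k` uses, input `f u`), that the decision `g v y` equals `b`.
Here `b = true` encodes `Ĥ = 1` and `b = false` encodes `Ĥ = 0`. -/
noncomputable def decProb {U V X Y : Type} [Fintype U] [Fintype V] [Fintype X] [Fintype Y]
    (R : U × V → ℝ) (Γ : X → Y → ℝ) {n k : ℕ}
    (f : (Fin n → U) → Fin k → X) (g : (Fin n → V) → (Fin k → Y) → Bool) (b : Bool) : ℝ :=
  ∑ u : Fin n → U, ∑ v : Fin n → V, ∑ y : Fin k → Y,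
    (∏ i, R (u i, v i)) * (∏ j, Γ (f u j) (y j)) * (if g v y = b then 1 else 0)

/-- The set of `ε`-achievable type-II (miss-detection) error exponents with a
sublinear number of channel uses. -/
noncomputable def steinSetSublin {U V X Y : Type} [Fintype U] [Fintype V] [Fintype X] [Fintype Y]
    (P Q : U × V → ℝ) (Γ : X → Y → ℝ) (ε : ℝ) : Set ℝ :=
  {θ | 0 < θ ∧ ∃ (k : ℕ → ℕ)
      (f : ∀ n, (Fin n → U) → Fin (k n) → X)
      (g : ∀ n, (Fin n → V) → (Fin (k n) → Y) → Bool),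
      Tendsto (fun n => (k n : ℝ)) atTop atTop ∧
      Tendsto (fun n => (k n : ℝ) / (n : ℝ)) atTop (nhds 0) ∧
      limsup (fun n : ℕ => decProb P Γ (f n) (g n) true) atTop ≤ ε ∧
      θ ≤ liminf (fun n : ℕ => -(1 / (n : ℝ)) * Real.logb 2 (decProb Q Γ (f n) (g n) false)) atTop}

/-- Minimum of `D(π‖Q)` over all pmfs `π` on `U × V` with prescribed marginals. -/
noncomputable def minDivMarg {U V : Type} [Fintype U] [Fintype V]
    (Q : U × V → ℝ) (pU : U → ℝ) (pV : V → ℝ) : ℝ :=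
  sInf {d | ∃ π : U × V → ℝ, IsPMF π ∧
    (∀ u, margU π u = pU u) ∧ (∀ v, margV π v = pV v) ∧ d = klDiv2 π Q}

lemma aux_side {α : Type} [Fintype α] (p : α → ℝ) (hp : IsPMF p) (μ : ℝ) (hμ0 : 0 ≤ μ)
    (hμ : ∀ a, 0 < p a → μ ≤ p a) (t : ℝ) (r : ℕ) (ht : 0 ≤ t) (htr : t ≤ r) (hr : 0 < r)
    (A : α → ℝ) (hA0 : ∀ a, 0 ≤ A a) (hA1 : ∀ a, 0 < p a → A a ≤ 1) :
    (∑ a, p a * A a) ^ r ≤ 1 ∧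
    ((∑ a, p a * A a) ^ r ≤ Real.exp (-(μ * t / 2)) ∨
      ((∀ a, 0 < p a → 0 < A a) ∧
        (∑ a, p a * A a) ^ r ≤ Real.exp (r * ∑ a, p a * Real.log (A a) + t ^ 2 / r))) := by
  obtain ⟨hp0, hp1⟩ := hp
  have hrR : (0 : ℝ) < r := by exact_mod_cast hr
  have hE0 : 0 ≤ ∑ a, p a * A a := Finset.sum_nonneg fun a _ => mul_nonneg (hp0 a) (hA0 a)
  have hle : ∀ a, p a * A a ≤ p a := by
    intro a
    rcases (hp0 a).eq_or_lt with h | h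
    · simp [← h]
    · exact mul_le_of_le_one_right (hp0 a) (hA1 a h)
  have hE1 : ∑ a, p a * A a ≤ 1 := by
    rw [← hp1]; exact Finset.sum_le_sum fun a _ => hle a
  refine ⟨pow_le_one₀ hE0 hE1, ?_⟩
  have hx0 : 0 ≤ t / r := by positivity
  have hx1 : t / r ≤ 1 := by rw [div_le_one hrR]; exact htr
  by_cases hc : ∃ a, 0 < p a ∧ A a < Real.exp (-(t / r))
  · left
    obtain ⟨a, ha, haA⟩ := hc
    have h1 : Real.exp (-(t / r)) ≤ 1 - t / r / 2 := by
      have h3 : Real.exp (-(t/r)) * (1 + t/r + (t/r)^2/2) ≤ 1 := by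
        rw [Real.exp_neg, inv_mul_le_iff₀ (Real.exp_pos _), mul_one]
        exact Real.quadratic_le_exp_of_nonneg hx0
      have h4 : (0:ℝ) < 1 + t/r + (t/r)^2/2 := by positivity
      have h5 : Real.exp (-(t/r)) ≤ 1 / (1 + t/r + (t/r)^2/2) := by
        rw [le_div_iff₀ h4]; exact h3
      refine h5.trans ?_
      rw [div_le_iff₀ h4]
      nlinarith [mul_nonneg hx0 (sub_nonneg.2 hx1), mul_nonneg hx0 hx0, mul_nonneg (mul_nonneg hx0 hx0) (sub_nonneg.2 hx1)]
    have h2 : ∑ a, p a * A a ≤ 1 - μ * (t / r / 2) := by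
      classical
      have h3 : ∑ b, p b * A b ≤ ∑ b, (p b - if b = a then μ * (t / r / 2) else 0) := by
        refine Finset.sum_le_sum fun b _ => ?_
        split_ifs with hb
        · subst hb
          have := hμ b ha
          nlinarith [mul_le_mul_of_nonneg_left (haA.le.trans h1) (hp0 b), mul_nonneg (sub_nonneg.2 this) hx0]
        · simpa using hle b
      rw [Finset.sum_sub_distrib, hp1] at h3
      simpa using h3
    have h3 : ∑ a, p a * A a ≤ Real.exp (-(μ * (t / r / 2))) := by
      have := Real.add_one_le_exp (-(μ * (t / r / 2)))
      linarith
    calc _ ≤ (Real.exp (-(μ * (t / r / 2)))) ^ r := pow_le_pow_left₀ hE0 h3 r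
      _ = _ := by
        rw [← Real.exp_nat_mul]; congr 1; field_simp
  · right
    push Not at hc
    have hpos : ∀ a, 0 < p a → 0 < A a := fun a ha => (Real.exp_pos _).trans_le (hc a ha)
    refine ⟨hpos, ?_⟩
    have h1 : ∀ a, p a * A a ≤ p a * (1 + Real.log (A a) + (t / r) ^ 2) := by
      intro a
      rcases (hp0 a).eq_or_lt with h | h
      · simp [← h]
      · refine mul_le_mul_of_nonneg_left ?_ (hp0 a)
        have hl0 : Real.log (A a) ≤ 0 := Real.log_nonpos (hA0 a) (hA1 a h)
        have hl1 : -(t / r) ≤ Real.log (A a) := by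
          rw [Real.le_log_iff_exp_le (hpos a h)]; exact hc a h
        have := (abs_le.mp (Real.abs_exp_sub_one_sub_id_le (x := Real.log (A a)) (abs_le.2 ⟨by linarith, by linarith⟩))).2
        rw [Real.exp_log (hpos a h)] at this
        nlinarith
    have h2 : ∑ a, p a * A a ≤ 1 + ∑ a, p a * Real.log (A a) + (t / r) ^ 2 := by
      refine (Finset.sum_le_sum fun a _ => h1 a).trans (le_of_eq ?_)
      simp only [mul_add, Finset.sum_add_distrib, ← Finset.sum_mul, hp1, mul_one, one_mul]
    have h3 : ∑ a, p a * A a ≤ Real.exp (∑ a, p a * Real.log (A a) + (t / r) ^ 2) := by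
      have := Real.add_one_le_exp (∑ a, p a * Real.log (A a) + (t / r) ^ 2)
      linarith
    calc _ ≤ (Real.exp (∑ a, p a * Real.log (A a) + (t / r) ^ 2)) ^ r := pow_le_pow_left₀ hE0 h3 r
      _ = _ := by
        rw [← Real.exp_nat_mul]; congr 1; field_simp

lemma aux_minpos {α : Type} [Fintype α] (p : α → ℝ) :
    ∃ μ : ℝ, 0 < μ ∧ ∀ a, 0 < p a → μ ≤ p a := by
  classical
  by_cases h : (Finset.univ.filter fun a => 0 < p a).Nonempty
  · obtain ⟨a, ha, hmin⟩ := Finset.exists_min_image _ p h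
    refine ⟨p a, by simpa using ha, fun b hb => hmin b (by simpa using hb)⟩
  · refine ⟨1, one_pos, fun a ha => (h ⟨a, by simpa using ha⟩).elim⟩

lemma aux_margU_pmf {U V : Type} [Fintype U] [Fintype V] {π : U × V → ℝ} (h : IsPMF π) :
    IsPMF (margU π) := by
  refine ⟨fun u => Finset.sum_nonneg fun v _ => h.1 _, ?_⟩
  rw [← h.2, Fintype.sum_prod_type]; rfl

lemma aux_margV_pmf {U V : Type} [Fintype U] [Fintype V] {π : U × V → ℝ} (h : IsPMF π) :
    IsPMF (margV π) := by
  refine ⟨fun u => Finset.sum_nonneg fun v _ => h.1 _, ?_⟩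
  rw [← h.2, Fintype.sum_prod_type_right]; rfl

lemma aux_single0 {U V : Type} [Fintype U] [Fintype V] (π Q : U × V → ℝ) (hπ : IsPMF π)
    (hQpos : ∀ p, 0 < Q p) (c : ℝ) (hc : 0 < c)
    (hcD : c < Real.exp (-∑ w, π w * Real.log (π w / Q w))) :
    ∃ r : ℕ, 0 < r ∧ ∀ (A : U → ℝ) (B : V → ℝ), (∀ u, 0 ≤ A u) → (∀ v, 0 ≤ B v) →
      (∀ u, 0 < margU π u → A u ≤ 1) → (∀ v, 0 < margV π v → B v ≤ 1) →
      (∃ u, A u = 1) → (∃ v, B v = 1) →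
      c * (∑ u, margU π u * A u) ^ r * (∑ v, margV π v * B v) ^ r
        ≤ ∑ w, Q w * (A w.1 ^ r * B w.2 ^ r) := by
  set D := ∑ w, π w * Real.log (π w / Q w) with hD
  obtain ⟨μ, hμ0, hμ⟩ := aux_minpos (margU π)
  obtain ⟨ν, hν0, hν⟩ := aux_minpos (margV π)
  obtain ⟨q, hq0, hq⟩ := aux_minpos Q
  have hη : 0 < -D - Real.log c := by
    have := Real.log_lt_log hc hcD
    rw [Real.log_exp] at this; linarith
  -- choose t
  obtain ⟨t, ht0, ht1, ht2⟩ : ∃ t : ℝ, 0 ≤ t ∧ c * Real.exp (-(μ * t / 2)) ≤ q ∧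
      c * Real.exp (-(ν * t / 2)) ≤ q := by
    have key : ∀ m : ℝ, 0 < m → ∀ᶠ t : ℝ in atTop, c * Real.exp (-(m * t / 2)) ≤ q := by
      intro m hm
      have h1 : Tendsto (fun t : ℝ => m * t / 2) atTop atTop :=
        (tendsto_id.const_mul_atTop hm).atTop_div_const two_pos
      have h2 := (Real.tendsto_exp_neg_atTop_nhds_zero.comp h1).const_mul c
      rw [mul_zero] at h2
      exact (h2.eventually (gt_mem_nhds hq0)).mono fun t ht => ht.le
    obtain ⟨t, h1, h2, h3⟩ := ((eventually_ge_atTop (0:ℝ)).and ((key μ hμ0).and (key ν hν0))).exists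
    exact ⟨t, h1, h2, h3⟩
  obtain ⟨r, hr1⟩ := exists_nat_gt (max (max t (2 * t ^ 2 / (-D - Real.log c))) 0)
  have hr0 : (0:ℝ) < r := (le_max_right _ _).trans_lt hr1
  have hrt : t ≤ r := ((le_max_left _ _).trans (le_max_left _ _)).trans hr1.le
  have hr2 : 2 * t ^ 2 / (-D - Real.log c) ≤ r := ((le_max_right _ _).trans (le_max_left _ _)).trans hr1.le
  have hr : 0 < r := by exact_mod_cast hr0
  refine ⟨r, hr, fun A B hA0 hB0 hA1 hB1 ⟨u0, hu0⟩ ⟨v0, hv0⟩ => ?_⟩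
  have hterm : ∀ w : U × V, 0 ≤ Q w * (A w.1 ^ r * B w.2 ^ r) := fun w =>
    mul_nonneg (hQpos w).le (mul_nonneg (pow_nonneg (hA0 _) _) (pow_nonneg (hB0 _) _))
  have hbig : q ≤ ∑ w, Q w * (A w.1 ^ r * B w.2 ^ r) := by
    refine le_trans ?_ (Finset.single_le_sum (fun w _ => hterm w) (Finset.mem_univ (u0, v0)))
    simpa [hu0, hv0] using hq _ (hQpos (u0, v0))
  obtain ⟨a1, a2⟩ := aux_side (margU π) (aux_margU_pmf hπ) μ hμ0.le hμ t r ht0 hrt hr A hA0 hA1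
  obtain ⟨b1, b2⟩ := aux_side (margV π) (aux_margV_pmf hπ) ν hν0.le hν t r ht0 hrt hr B hB0 hB1
  have ha0 : 0 ≤ (∑ u, margU π u * A u) ^ r := pow_nonneg (Finset.sum_nonneg fun u _ =>
    mul_nonneg ((aux_margU_pmf hπ).1 u) (hA0 u)) _
  have hb0 : 0 ≤ (∑ u, margV π u * B u) ^ r := pow_nonneg (Finset.sum_nonneg fun u _ =>
    mul_nonneg ((aux_margV_pmf hπ).1 u) (hB0 u)) _
  rcases a2 with a2 | ⟨apos, a2⟩
  · refine le_trans ?_ hbig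
    refine le_trans ?_ ht1
    calc _ ≤ c * (∑ u, margU π u * A u) ^ r := mul_le_of_le_one_right (by positivity) b1
      _ ≤ _ := by gcongr
  rcases b2 with b2 | ⟨bpos, b2⟩
  · refine le_trans ?_ hbig
    refine le_trans ?_ ht2
    calc _ ≤ c * (∑ u, margV π u * B u) ^ r := by
            gcongr
            exact mul_le_of_le_one_right hc.le a1
      _ ≤ _ := by gcongr
  set X := ∑ u, margU π u * Real.log (A u) with hX
  set Z := ∑ u, margV π u * Real.log (B u) with hZ
  have hXe : X = ∑ w, π w * Real.log (A w.1) := by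
    rw [hX, Fintype.sum_prod_type]; simp only [margU, Finset.sum_mul]
  have hZe : Z = ∑ w, π w * Real.log (B w.2) := by
    rw [hZ, Fintype.sum_prod_type_right]; simp only [margV, Finset.sum_mul]
  have hJ : Real.exp (-D + r * X + r * Z) ≤ ∑ w, Q w * (A w.1 ^ r * B w.2 ^ r) := by
    set T := -D + r * X + r * Z with hT
    set x : U × V → ℝ := fun w => -Real.log (π w / Q w) + r * Real.log (A w.1) + r * Real.log (B w.2) with hx
    have hTx : T = ∑ w, π w * x w := by
      rw [hT, hD, hXe, hZe]
      simp only [hx, Finset.mul_sum, ← Finset.sum_neg_distrib, ← Finset.sum_add_distrib]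
      refine Finset.sum_congr rfl fun w _ => by ring
    have h1 : ∀ w, π w * (Real.exp T * (1 + (x w - T))) ≤ Q w * (A w.1 ^ r * B w.2 ^ r) := by
      intro w
      rcases (hπ.1 w).eq_or_lt with h | h
      · rw [← h, zero_mul]; exact hterm w
      · have hAp : 0 < A w.1 := apos _ (h.trans_le (Finset.single_le_sum (f := fun v => π (w.1, v)) (fun v _ => hπ.1 _) (Finset.mem_univ w.2)))
        have hBp : 0 < B w.2 := bpos _ (h.trans_le (Finset.single_le_sum (f := fun v => π (v, w.2)) (fun v _ => hπ.1 _) (Finset.mem_univ w.1)))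
        have hex : π w * Real.exp (x w) = Q w * (A w.1 ^ r * B w.2 ^ r) := by
          have := hQpos w
          simp only [hx, Real.exp_add, Real.exp_neg, Real.exp_nat_mul]
          rw [Real.exp_log (by positivity), Real.exp_log hAp, Real.exp_log hBp]
          field_simp
        rw [← hex]
        refine mul_le_mul_of_nonneg_left ?_ h.le
        have := Real.add_one_le_exp (x w - T)
        calc _ ≤ Real.exp T * Real.exp (x w - T) := by gcongr; linarith
          _ = _ := by rw [← Real.exp_add]; ring_nf
    refine le_trans (le_of_eq ?_) (Finset.sum_le_sum fun w _ => h1 w)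
    have : ∀ w, π w * (Real.exp T * (1 + (x w - T))) = Real.exp T * (π w * (1 - T)) + Real.exp T * (π w * x w) := fun w => by ring
    simp only [this, Finset.sum_add_distrib, ← Finset.mul_sum, ← Finset.sum_mul, hπ.2, ← hTx]
    ring
  refine le_trans ?_ hJ
  calc _ ≤ c * Real.exp (r * X + t ^ 2 / r) * Real.exp (r * Z + t ^ 2 / r) := by gcongr
    _ = Real.exp (Real.log c + (r * X + t ^ 2 / r) + (r * Z + t ^ 2 / r)) := by
      rw [Real.exp_add (Real.log c + _), Real.exp_add (Real.log c), Real.exp_log hc]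
    _ ≤ _ := by
      rw [Real.exp_le_exp]
      have : 2 * t ^ 2 / r ≤ -D - Real.log c := by
        rw [div_le_iff₀ hη] at hr2
        rw [div_le_iff₀ hr0]; linarith
      have e : 2 * t ^ 2 / r = t ^ 2 / r + t ^ 2 / r := by ring
      linarith

lemma aux_scale {α : Type} [Fintype α] (p : α → ℝ) (hp : IsPMF p) (A : α → ℝ) (hA : ∀ a, 0 ≤ A a) :
    (∑ a, p a * A a = 0) ∨ ∃ (M : ℝ) (A' : α → ℝ), 0 < M ∧ (∀ a, 0 ≤ A' a) ∧ (∀ a, 0 < p a → A' a ≤ 1) ∧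
      (∃ a, A' a = 1) ∧ ∀ a, A a = M * A' a := by
  classical
  have h : (Finset.univ.filter fun a => 0 < p a).Nonempty := by
    by_contra hne
    have : ∀ a, p a = 0 := fun a => le_antisymm (not_lt.1 fun ha => hne ⟨a, by simpa using ha⟩) (hp.1 a)
    have h1 := hp.2
    simp [this] at h1
  obtain ⟨a, ha, hmax⟩ := Finset.exists_max_image _ A h
  rcases (hA a).eq_or_lt with h0 | h0
  · left
    refine Finset.sum_eq_zero fun b _ => ?_
    rcases (hp.1 b).eq_or_lt with hb | hb
    · simp [← hb]
    · have := hmax b (by simpa using hb)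
      rw [← h0] at this
      rw [le_antisymm this (hA b), mul_zero]
  · right
    refine ⟨A a, fun b => A b / A a, h0, fun b => div_nonneg (hA b) h0.le, fun b hb => ?_, ⟨a, div_self h0.ne'⟩, fun b => by field_simp⟩
    exact (div_le_one h0).2 (hmax b (by simpa using hb))

lemma aux_single {U V : Type} [Fintype U] [Fintype V] (π Q : U × V → ℝ) (hπ : IsPMF π)
    (hQpos : ∀ p, 0 < Q p) (c : ℝ) (hc : 0 < c)
    (hcD : c < Real.exp (-∑ w, π w * Real.log (π w / Q w))) :
    ∃ r : ℕ, 0 < r ∧ ∀ (A : U → ℝ) (B : V → ℝ), (∀ u, 0 ≤ A u) → (∀ v, 0 ≤ B v) →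
      c * (∑ u, margU π u * A u) ^ r * (∑ v, margV π v * B v) ^ r
        ≤ ∑ u, ∑ v, Q (u, v) * (A u ^ r * B v ^ r) := by
  obtain ⟨r, hr, H⟩ := aux_single0 π Q hπ hQpos c hc hcD
  refine ⟨r, hr, fun A B hA hB => ?_⟩
  rw [← Fintype.sum_prod_type (f := fun w : U × V => Q w * (A w.1 ^ r * B w.2 ^ r))]
  have hterm : ∀ w : U × V, 0 ≤ Q w * (A w.1 ^ r * B w.2 ^ r) := fun w =>
    mul_nonneg (hQpos w).le (mul_nonneg (pow_nonneg (hA _) _) (pow_nonneg (hB _) _))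
  have h0 := Finset.sum_nonneg fun w (_ : w ∈ Finset.univ) => hterm w
  rcases aux_scale _ (aux_margU_pmf hπ) A hA with h | ⟨M, A', hM, hA'0, hA'1, hA'2, hAe⟩
  · rw [h, zero_pow hr.ne']; simpa using h0
  rcases aux_scale _ (aux_margV_pmf hπ) B hB with h | ⟨N, B', hN, hB'0, hB'1, hB'2, hBe⟩
  · rw [h, zero_pow hr.ne']; simpa using h0
  have := mul_le_mul_of_nonneg_left (H A' B' hA'0 hB'0 hA'1 hB'1 hA'2 hB'2) (show 0 ≤ M ^ r * N ^ r by positivity)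
  have e1 : ∑ u, margU π u * A u = M * ∑ u, margU π u * A' u := by
    rw [Finset.mul_sum]; exact Finset.sum_congr rfl fun u _ => by rw [hAe]; ring
  have e2 : ∑ u, margV π u * B u = N * ∑ u, margV π u * B' u := by
    rw [Finset.mul_sum]; exact Finset.sum_congr rfl fun u _ => by rw [hBe]; ring
  rw [e1, e2, mul_pow, mul_pow]
  refine le_trans (le_of_eq (by ring)) (this.trans (le_of_eq ?_))
  · rw [Finset.mul_sum]
    refine Finset.sum_congr rfl fun w _ => ?_
    rw [hAe, hBe, mul_pow, mul_pow]; ring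

lemma aux_sum_succ {α : Type} [Fintype α] {n : ℕ} (F : (Fin (n+1) → α) → ℝ) :
    ∑ u, F u = ∑ a, ∑ u : Fin n → α, F (Fin.cons a u) := by
  rw [← (Fin.consEquiv (fun _ : Fin (n+1) => α)).sum_comp, Fintype.sum_prod_type]
  rfl

lemma aux_tensor {U V : Type} [Fintype U] [Fintype V] (p : U → ℝ) (s : V → ℝ) (Q : U × V → ℝ)
    (hp : ∀ u, 0 ≤ p u) (hs : ∀ u, 0 ≤ s u)
    (hQpos : ∀ p, 0 < Q p) (c : ℝ) (hc : 0 < c) (r : ℕ)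
    (H : ∀ (A : U → ℝ) (B : V → ℝ), (∀ u, 0 ≤ A u) → (∀ v, 0 ≤ B v) →
      c * (∑ u, p u * A u) ^ r * (∑ v, s v * B v) ^ r
        ≤ ∑ u, ∑ v, Q (u, v) * (A u ^ r * B v ^ r)) (n : ℕ) :
    ∀ (A : (Fin n → U) → ℝ) (B : (Fin n → V) → ℝ), (∀ u, 0 ≤ A u) → (∀ v, 0 ≤ B v) →
      c ^ n * (∑ u, (∏ i, p (u i)) * A u) ^ r * (∑ v, (∏ i, s (v i)) * B v) ^ r
        ≤ ∑ u, ∑ v, (∏ i, Q (u i, v i)) * (A u ^ r * B v ^ r) := by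
  induction n with
  | zero => intro A B _ _; simp
  | succ n ih =>
    intro A B hA hB
    have h1 := H (fun a => ∑ u : Fin n → U, (∏ i, p (u i)) * A (Fin.cons a u))
      (fun b => ∑ u : Fin n → V, (∏ i, s (u i)) * B (Fin.cons b u))
      (fun a => Finset.sum_nonneg fun u _ => mul_nonneg (Finset.prod_nonneg fun i _ => hp _) (hA _))
      (fun a => Finset.sum_nonneg fun u _ => mul_nonneg (Finset.prod_nonneg fun i _ => hs _) (hB _))
    have h2 := mul_le_mul_of_nonneg_left h1 (pow_nonneg hc.le n)
    calc _ = c ^ n * (c * (∑ u, p u * ∑ u' : Fin n → U, (∏ i, p (u' i)) * A (Fin.cons u u')) ^ r *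
        (∑ v, s v * ∑ v' : Fin n → V, (∏ i, s (v' i)) * B (Fin.cons v v')) ^ r) := by
          rw [aux_sum_succ, aux_sum_succ]
          simp only [Fin.prod_univ_succ, Fin.cons_zero, Fin.cons_succ, Finset.mul_sum, mul_assoc, pow_succ]
      _ ≤ _ := h2
      _ ≤ ∑ a, ∑ b, Q (a, b) * ∑ u : Fin n → U, ∑ v : Fin n → V, (∏ i, Q (u i, v i)) *
            (A (Fin.cons a u) ^ r * B (Fin.cons b v) ^ r) := by
          rw [Finset.mul_sum]
          refine Finset.sum_le_sum fun a _ => ?_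
          rw [Finset.mul_sum]
          refine Finset.sum_le_sum fun b _ => ?_
          have := mul_le_mul_of_nonneg_left (ih (fun u => A (Fin.cons a u)) (fun v => B (Fin.cons b v))
            (fun _ => hA _) (fun _ => hB _)) (hQpos (a, b)).le
          refine le_trans (le_of_eq ?_) this
          ring
      _ = _ := by
          rw [aux_sum_succ]
          refine Finset.sum_congr rfl fun a _ => ?_
          simp only [aux_sum_succ (α := V)]
          rw [Finset.sum_comm]
          refine Finset.sum_congr rfl fun b _ => ?_
          simp only [Fin.prod_univ_succ, Fin.cons_zero, Fin.cons_succ, Finset.mul_sum, mul_assoc]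

lemma aux_prodsum {α : Type} [Fintype α] {n : ℕ} (h : Fin n → α → ℝ) :
    ∑ u : Fin n → α, ∏ i, h i (u i) = ∏ i, ∑ a, h i a := by
  classical
  rw [Finset.prod_univ_sum, Fintype.piFinset_univ]

lemma aux_margU_sum {U V : Type} [Fintype U] [Fintype V] (R : U × V → ℝ) {n : ℕ} (φ : (Fin n → U) → ℝ) :
    ∑ u : Fin n → U, ∑ v : Fin n → V, (∏ i, R (u i, v i)) * φ u = ∑ u, (∏ i, margU R (u i)) * φ u := by
  refine Finset.sum_congr rfl fun u _ => ?_
  rw [← Finset.sum_mul, aux_prodsum (fun i b => R (u i, b))]; rfl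

lemma aux_margV_sum {U V : Type} [Fintype U] [Fintype V] (R : U × V → ℝ) {n : ℕ} (φ : (Fin n → V) → ℝ) :
    ∑ u : Fin n → U, ∑ v : Fin n → V, (∏ i, R (u i, v i)) * φ v = ∑ v, (∏ i, margV R (v i)) * φ v := by
  rw [Finset.sum_comm]
  refine Finset.sum_congr rfl fun v _ => ?_
  rw [← Finset.sum_mul, aux_prodsum (fun i b => R (b, v i))]; rfl

lemma aux_total {U V X Y : Type} [Fintype U] [Fintype V] [Fintype X] [Fintype Y]
    (R : U × V → ℝ) (hR : IsPMF R) (Γ : X → Y → ℝ) (hΓ : ∀ x, IsPMF (Γ x)) {n k : ℕ}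
    (f : (Fin n → U) → Fin k → X) (g : (Fin n → V) → (Fin k → Y) → Bool) :
    decProb R Γ f g true + decProb R Γ f g false = 1 := by
  unfold decProb
  simp only [← Finset.sum_add_distrib, ← mul_add]
  have h1 : ∀ b : Bool, ((if b = true then (1:ℝ) else 0) + if b = false then 1 else 0) = 1 := by
    intro b; cases b <;> simp
  simp only [h1, mul_one, ← Finset.mul_sum]
  have h2 : ∀ u, ∑ y : Fin k → Y, ∏ j, Γ (f u j) (y j) = 1 := by
    intro u
    rw [aux_prodsum (fun j b => Γ (f u j) b)]
    simp [(hΓ _).2]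
  simp only [h2]
  rw [aux_margU_sum R (fun _ => 1)]
  simp only [mul_one]
  rw [aux_prodsum (fun _ b => margU R b)]
  simp [(aux_margU_pmf hR).2]

lemma aux_nonneg {U V X Y : Type} [Fintype U] [Fintype V] [Fintype X] [Fintype Y]
    (R : U × V → ℝ) (hR : IsPMF R) (Γ : X → Y → ℝ) (hΓ : ∀ x, IsPMF (Γ x)) {n k : ℕ}
    (f : (Fin n → U) → Fin k → X) (g : (Fin n → V) → (Fin k → Y) → Bool) (b : Bool) :
    0 ≤ decProb R Γ f g b := by
  refine Finset.sum_nonneg fun u _ => Finset.sum_nonneg fun v _ => Finset.sum_nonneg fun y _ => ?_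
  refine mul_nonneg (mul_nonneg (Finset.prod_nonneg fun i _ => hR.1 _) (Finset.prod_nonneg fun i _ => (hΓ _).1 _)) ?_
  split_ifs <;> norm_num

lemma aux_conv_bound {U V X Y : Type} [Fintype U] [Fintype V] [Fintype X] [Fintype Y] [Nonempty Y]
    (P Q : U × V → ℝ) (hP : IsPMF P) (hQpos : ∀ p : U × V, 0 < Q p)
    (Γ : X → Y → ℝ) (hΓ : ∀ x, IsPMF (Γ x)) (c : ℝ) (hc : 0 < c) (r : ℕ) (hr : 0 < r)
    (H : ∀ (A : U → ℝ) (B : V → ℝ), (∀ u, 0 ≤ A u) → (∀ v, 0 ≤ B v) →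
      c * (∑ u, margU P u * A u) ^ r * (∑ v, margV P v * B v) ^ r
        ≤ ∑ u, ∑ v, Q (u, v) * (A u ^ r * B v ^ r)) {n k : ℕ}
    (f : (Fin n → U) → Fin k → X) (g : (Fin n → V) → (Fin k → Y) → Bool) (δ : ℝ) (hδ : 0 < δ)
    (hle : δ ≤ decProb P Γ f g false) :
    c ^ n * (δ / (Fintype.card Y : ℝ) ^ k) ^ r * (δ / (Fintype.card Y : ℝ) ^ k) ^ r ≤ decProb Q Γ f g false := by
  classical
  have hsw : ∀ R : U × V → ℝ, decProb R Γ f g false = ∑ y : Fin k → Y, ∑ u : Fin n → U, ∑ v : Fin n → V,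
      (∏ i, R (u i, v i)) * ((∏ j, Γ (f u j) (y j)) * (if g v y = false then 1 else 0)) := by
    intro R
    unfold decProb
    rw [Finset.sum_comm]
    rw [Finset.sum_comm' (t' := Finset.univ) (s' := fun _ => Finset.univ) (by simp)]
    simp only [mul_assoc]
    have : ∀ u : Fin n → U, ∑ v : Fin n → V, ∑ y : Fin k → Y, (∏ i, R (u i, v i)) * ((∏ j, Γ (f u j) (y j)) * (if g v y = false then (1:ℝ) else 0)) = ∑ y : Fin k → Y, ∑ v : Fin n → V, (∏ i, R (u i, v i)) * ((∏ j, Γ (f u j) (y j)) * (if g v y = false then 1 else 0)) :=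
      fun u => Finset.sum_comm
    simp only [this]
    rw [Finset.sum_comm]
  have hΓ1 : ∀ x y, Γ x y ≤ 1 := fun x y => by
    rw [← (hΓ x).2]
    exact Finset.single_le_sum (fun y _ => (hΓ x).1 y) (Finset.mem_univ y)
  rw [hsw] at hle
  obtain ⟨y, -, hy⟩ := Finset.exists_le_of_sum_le (s := (Finset.univ : Finset (Fin k → Y)))
    (f := fun _ => δ / (Fintype.card Y : ℝ) ^ k) Finset.univ_nonempty (by
      refine le_trans (le_of_eq ?_) hle
      have : (Fintype.card Y : ℝ) ≠ 0 := by exact_mod_cast Fintype.card_ne_zero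
      simp only [Finset.sum_const, Finset.card_univ, Fintype.card_fun, Fintype.card_fin, nsmul_eq_mul]
      push_cast
      field_simp)
  set φ : (Fin n → U) → ℝ := fun u => ∏ j, Γ (f u j) (y j) with hφ
  set ψ : (Fin n → V) → ℝ := fun v => if g v y = false then 1 else 0 with hψ
  have hφ0 : ∀ u, 0 ≤ φ u := fun u => Finset.prod_nonneg fun j _ => (hΓ _).1 _
  have hφ1 : ∀ u, φ u ≤ 1 := fun u => Finset.prod_le_one (fun j _ => (hΓ _).1 _) fun j _ => hΓ1 _ _
  have hψ0 : ∀ v, 0 ≤ ψ v := fun v => by simp only [hψ]; split_ifs <;> norm_num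
  have hψ1 : ∀ v, ψ v ≤ 1 := fun v => by simp only [hψ]; split_ifs <;> norm_num
  have hψr : ∀ v, ψ v ^ r = ψ v := fun v => by simp only [hψ]; split_ifs <;> simp [hr.ne']
  set A : (Fin n → U) → ℝ := fun u => φ u ^ (1 / (r:ℝ)) with hA
  have hr0 : (0:ℝ) < r := by exact_mod_cast hr
  have hA0 : ∀ u, 0 ≤ A u := fun u => Real.rpow_nonneg (hφ0 u) _
  have hAr : ∀ u, A u ^ r = φ u := fun u => by
    simp only [hA]
    rw [← Real.rpow_natCast, ← Real.rpow_mul (hφ0 u)]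
    rw [one_div_mul_cancel hr0.ne', Real.rpow_one]
  have hAφ : ∀ u, φ u ≤ A u := fun u => by
    have h1 : A u ≤ 1 := Real.rpow_le_one (hφ0 u) (hφ1 u) (by positivity)
    rw [← hAr u]
    exact pow_le_of_le_one (hA0 u) h1 hr.ne'
  have hPn : ∀ (u : Fin n → U) (v : Fin n → V), 0 ≤ ∏ i : Fin n, P (u i, v i) := fun u v => Finset.prod_nonneg fun i _ => hP.1 _
  have hQn : ∀ (u : Fin n → U) (v : Fin n → V), 0 ≤ ∏ i : Fin n, Q (u i, v i) := fun u v => Finset.prod_nonneg fun i _ => (hQpos _).le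
  have hT := aux_tensor (margU P) (margV P) Q (aux_margU_pmf hP).1 (aux_margV_pmf hP).1 hQpos c hc r H n
    A ψ hA0 hψ0
  have hEA : δ / (Fintype.card Y : ℝ) ^ k ≤ ∑ u, (∏ i, margU P (u i)) * A u := by
    rw [← aux_margU_sum]
    refine hy.trans (Finset.sum_le_sum fun u _ => Finset.sum_le_sum fun v _ => ?_)
    refine mul_le_mul_of_nonneg_left ?_ (hPn u v)
    exact (mul_le_of_le_one_right (hφ0 u) (hψ1 v)).trans (hAφ u)
  have hEB : δ / (Fintype.card Y : ℝ) ^ k ≤ ∑ u, (∏ i, margV P (u i)) * ψ u := by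
    rw [← aux_margV_sum]
    refine hy.trans (Finset.sum_le_sum fun u _ => Finset.sum_le_sum fun v _ => ?_)
    refine mul_le_mul_of_nonneg_left ?_ (hPn u v)
    exact mul_le_of_le_one_left (hψ0 v) (hφ1 u)
  have hd0 : 0 ≤ δ / (Fintype.card Y : ℝ) ^ k := by positivity
  calc _ ≤ c ^ n * (∑ u, (∏ i, margU P (u i)) * A u) ^ r * (∑ v, (∏ i, margV P (v i)) * ψ v) ^ r := by
        gcongr
        have := hd0.trans hEA
        positivity
    _ ≤ _ := hT
    _ = ∑ u : Fin n → U, ∑ v : Fin n → V, (∏ i, Q (u i, v i)) * (φ u * ψ v) := by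
        simp only [hAr, hψr]
    _ ≤ _ := by
        rw [hsw]
        refine Finset.single_le_sum (f := fun y => ∑ u : Fin n → U, ∑ v : Fin n → V,
      (∏ i, Q (u i, v i)) * ((∏ j, Γ (f u j) (y j)) * (if g v y = false then 1 else 0))) (fun y _ => ?_) (Finset.mem_univ y)
        refine Finset.sum_nonneg fun u _ => Finset.sum_nonneg fun v _ => mul_nonneg (hQn u v) (mul_nonneg (Finset.prod_nonneg fun j _ => (hΓ _).1 _) ?_)
        split_ifs <;> norm_num

lemma aux_kl {A : Type} [Fintype A] (p q : A → ℝ) :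
    ∑ a, p a * Real.log (p a / q a) = klDiv2 p q * Real.log 2 := by
  unfold klDiv2
  rw [Finset.sum_mul]
  refine Finset.sum_congr rfl fun a _ => ?_
  rw [Real.logb]
  have : Real.log 2 ≠ 0 := (Real.log_pos one_lt_two).ne'
  field_simp

lemma aux_conv {U V X Y : Type} [Fintype U] [Fintype V] [Fintype X] [Fintype Y] [Nonempty Y]
    (P Q : U × V → ℝ) (hP : IsPMF P) (hQpos : ∀ p : U × V, 0 < Q p)
    (Γ : X → Y → ℝ) (hΓ : ∀ x, IsPMF (Γ x)) (π : U × V → ℝ) (hπ : IsPMF π)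
    (hπU : ∀ u, margU π u = margU P u) (hπV : ∀ v, margV π v = margV P v)
    (d : ℝ) (hd : klDiv2 π Q < d) (k : ℕ → ℕ)
    (f : ∀ n, (Fin n → U) → Fin (k n) → X) (g : ∀ n, (Fin n → V) → (Fin (k n) → Y) → Bool)
    (hk : Tendsto (fun n => (k n : ℝ) / (n : ℝ)) atTop (nhds 0)) (δ : ℝ) (hδ : 0 < δ)
    (hα : ∀ᶠ n in atTop, decProb P Γ (f n) (g n) true ≤ 1 - δ) :
    ∀ᶠ n in atTop, 0 < decProb Q Γ (f n) (g n) false ∧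
      -(1 / (n : ℝ)) * Real.logb 2 (decProb Q Γ (f n) (g n) false) ≤ d := by
  obtain ⟨d', hd1, hd2⟩ := exists_between hd
  have hl2 : 0 < Real.log 2 := Real.log_pos one_lt_two
  have hc : (0:ℝ) < 2 ^ (-d') := by positivity
  obtain ⟨r, hr, H⟩ := aux_single π Q hπ hQpos (2 ^ (-d')) hc (by
    rw [aux_kl, Real.rpow_def_of_pos two_pos, Real.exp_lt_exp]
    nlinarith)
  simp only [hπU, hπV] at H
  have hY : (0:ℝ) < Fintype.card Y := by exact_mod_cast Fintype.card_pos
  have hlim : Tendsto (fun n : ℕ => d' - 2 * r * Real.logb 2 δ * (1 / (n:ℝ)) + 2 * r * Real.logb 2 (Fintype.card Y) * ((k n : ℝ) / n)) atTop (nhds d') := by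
    have h1 := (tendsto_one_div_atTop_nhds_zero_nat (𝕜 := ℝ)).const_mul (2 * r * Real.logb 2 δ)
    have h2 := hk.const_mul (2 * r * Real.logb 2 (Fintype.card Y))
    have := (tendsto_const_nhds (x := d')).sub h1 |>.add h2
    simpa using this
  filter_upwards [hα, hlim.eventually (gt_mem_nhds hd2), eventually_gt_atTop 0] with n hn1 hn2 hn0
  have hb := aux_conv_bound P Q hP hQpos Γ hΓ (2 ^ (-d')) hc r hr H (f n) (g n) δ hδ (by
    have := aux_total P hP Γ hΓ (f n) (g n); linarith)
  have hlb : 0 < ((2:ℝ) ^ (-d')) ^ n * (δ / (Fintype.card Y : ℝ) ^ (k n)) ^ r * (δ / (Fintype.card Y : ℝ) ^ (k n)) ^ r := by positivity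
  refine ⟨hlb.trans_le hb, ?_⟩
  have hlog := Real.logb_le_logb_of_le one_lt_two hlb hb
  rw [Real.logb_mul (by positivity) (by positivity), Real.logb_mul (by positivity) (by positivity),
    Real.logb_pow, Real.logb_pow, Real.logb_rpow two_pos (by norm_num),
    Real.logb_div hδ.ne' (by positivity), Real.logb_pow] at hlog
  refine le_trans ?_ hn2.le
  have hnR : (0:ℝ) < n := by exact_mod_cast hn0
  rw [neg_mul, neg_le, one_div_mul_eq_div, le_div_iff₀ hnR]
  refine le_trans (le_of_eq ?_) hlog
  field_simp
  ring

open Classical in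
/-- empirical distribution -/
noncomputable def auxEmp {α : Type} {n : ℕ} (w : Fin n → α) (a : α) : ℝ :=
  (∑ i, if w i = a then (1:ℝ) else 0) / n

/-- typical sequences -/
def auxTyp {α : Type} (p : α → ℝ) (δ : ℝ) {n : ℕ} (w : Fin n → α) : Prop :=
  ∀ a, |auxEmp w a - p a| ≤ δ

lemma aux_emp_pmf {α : Type} [Fintype α] {n : ℕ} (hn : 0 < n) (w : Fin n → α) : IsPMF (auxEmp w) := by
  classical
  constructor
  · intro a
    refine div_nonneg (Finset.sum_nonneg fun i _ => ?_) (Nat.cast_nonneg n)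
    split_ifs <;> norm_num
  · unfold auxEmp
    rw [← Finset.sum_div, Finset.sum_comm]
    have : (n:ℝ) ≠ 0 := by exact_mod_cast hn.ne'
    simp [this]

lemma aux_emp_margU {U V : Type} [Fintype U] [Fintype V] {n : ℕ} (u : Fin n → U) (v : Fin n → V) (a : U) :
    margU (auxEmp (fun i => (u i, v i))) a = auxEmp u a := by
  classical
  unfold margU auxEmp
  rw [← Finset.sum_div, Finset.sum_comm]
  congr 1
  refine Finset.sum_congr rfl fun i _ => ?_
  by_cases h : u i = a <;> simp [h]

lemma aux_emp_margV {U V : Type} [Fintype U] [Fintype V] {n : ℕ} (u : Fin n → U) (v : Fin n → V) (a : V) :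
    margV (auxEmp (fun i => (u i, v i))) a = auxEmp v a := by
  classical
  unfold margV auxEmp
  rw [← Finset.sum_div, Finset.sum_comm]
  congr 1
  refine Finset.sum_congr rfl fun i _ => ?_
  by_cases h : v i = a <;> simp [h]

lemma aux_pn_one {α : Type} [Fintype α] (p : α → ℝ) (hp : ∑ a, p a = 1) (n : ℕ) :
    ∑ w : Fin n → α, ∏ i, p (w i) = 1 := by
  rw [aux_prodsum (fun _ b => p b)]; simp [hp]

lemma aux_var {α : Type} [Fintype α] (p : α → ℝ) (hp : ∑ a, p a = 1) (h : α → ℝ)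
    (h0 : ∑ a, p a * h a = 0) (n : ℕ) :
    ∑ w : Fin n → α, (∏ i, p (w i)) * (∑ i, h (w i)) = 0 ∧
    ∑ w : Fin n → α, (∏ i, p (w i)) * (∑ i, h (w i)) ^ 2 = n * ∑ a, p a * h a ^ 2 := by
  induction n with
  | zero => simp
  | succ n ih =>
    obtain ⟨i1, i2⟩ := ih
    have e := aux_pn_one p hp n
    constructor
    · rw [aux_sum_succ]
      simp only [Fin.prod_univ_succ, Fin.sum_univ_succ, Fin.cons_zero, Fin.cons_succ]
      have : ∀ (a : α) (w : Fin n → α), p a * (∏ i, p (w i)) * (h a + ∑ i, h (w i)) =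
        (p a * h a) * (∏ i, p (w i)) + p a * ((∏ i, p (w i)) * ∑ i, h (w i)) := fun a w => by ring
      simp only [this, Finset.sum_add_distrib, ← Finset.mul_sum, e, i1, mul_one, mul_zero, h0, add_zero, Finset.sum_const_zero]
    · rw [aux_sum_succ]
      simp only [Fin.prod_univ_succ, Fin.sum_univ_succ, Fin.cons_zero, Fin.cons_succ]
      have : ∀ (a : α) (w : Fin n → α), p a * (∏ i, p (w i)) * (h a + ∑ i, h (w i)) ^ 2 =
        (p a * h a ^ 2) * (∏ i, p (w i)) + (2 * p a * h a) * ((∏ i, p (w i)) * ∑ i, h (w i))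
          + p a * ((∏ i, p (w i)) * (∑ i, h (w i)) ^ 2) := fun a w => by ring
      simp only [this, Finset.sum_add_distrib, ← Finset.mul_sum, e, i1, i2, mul_one, mul_zero, add_zero, ← Finset.sum_mul, hp, Finset.sum_const_zero]
      push_cast; ring

open Classical in
lemma aux_cheb {α : Type} [Fintype α] (p : α → ℝ) (hp : IsPMF p) (δ : ℝ) (hδ : 0 < δ) (n : ℕ) (hn : 0 < n) :
    ∑ w : Fin n → α, (∏ i, p (w i)) * (if auxTyp p δ w then 0 else 1) ≤
      (Fintype.card α / δ ^ 2) * (1 / (n:ℝ)) := by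
  have hnR : (0:ℝ) < n := by exact_mod_cast hn
  set h : α → α → ℝ := fun a b => (if b = a then 1 else 0) - p a with hh
  have hp1 : ∀ a, p a ≤ 1 := fun a => by
    rw [← hp.2]
    exact Finset.single_le_sum (fun y _ => hp.1 y) (Finset.mem_univ a)
  have hm : ∀ a, ∑ b, p b * h a b = 0 := by
    intro a
    simp [hh, mul_sub, Finset.sum_sub_distrib, ← Finset.sum_mul, hp.2]
  have hv : ∀ a, ∑ b, p b * h a b ^ 2 ≤ 1 := by
    intro a
    rw [← hp.2]
    refine Finset.sum_le_sum fun b _ => mul_le_of_le_one_right (hp.1 b) ?_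
    have := hp1 a
    have := hp.1 a
    simp only [hh]
    split_ifs <;> nlinarith
  have hpt : ∀ w : Fin n → α, (if auxTyp p δ w then (0:ℝ) else 1) ≤ ∑ a, (1 / (n * δ) ^ 2) * (∑ i, h a (w i)) ^ 2 := by
    intro w
    split_ifs with ht
    · positivity
    · unfold auxTyp at ht
      push Not at ht
      obtain ⟨a, ha⟩ := ht
      refine le_trans ?_ (Finset.single_le_sum (fun a _ => by positivity) (Finset.mem_univ a))
      have e : ∑ i, h a (w i) = n * (auxEmp w a - p a) := by
        simp only [hh, auxEmp, Finset.sum_sub_distrib]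
        simp
        field_simp
      rw [e, one_div_mul_eq_div, le_div_iff₀ (by positivity), one_mul, mul_pow, mul_pow, ← sq_abs (auxEmp w a - p a)]
      gcongr
  calc _ ≤ ∑ w : Fin n → α, (∏ i, p (w i)) * ∑ a, (1 / (n * δ) ^ 2) * (∑ i, h a (w i)) ^ 2 :=
        Finset.sum_le_sum fun w _ => mul_le_mul_of_nonneg_left (hpt w) (Finset.prod_nonneg fun i _ => hp.1 _)
    _ = ∑ a, (1 / (n * δ) ^ 2) * ∑ w : Fin n → α, (∏ i, p (w i)) * (∑ i, h a (w i)) ^ 2 := by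
        simp only [Finset.mul_sum]
        rw [Finset.sum_comm]
        refine Finset.sum_congr rfl fun a _ => Finset.sum_congr rfl fun w _ => by ring
    _ ≤ ∑ a : α, (1 / (n * δ) ^ 2) * n := by
        refine Finset.sum_le_sum fun a _ => mul_le_mul_of_nonneg_left ?_ (by positivity)
        rw [(aux_var p hp.2 (h a) (hm a) n).2]
        exact mul_le_of_le_one_right hnR.le (hv a)
    _ = _ := by
        simp only [Finset.sum_const, Finset.card_univ, nsmul_eq_mul]
        field_simp

lemma aux_types {α : Type} [Fintype α] {n : ℕ} (hn : 0 < n) :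
    ∑ w : Fin n → α, ∏ i, auxEmp w (w i) ≤ ((n:ℝ) + 1) ^ Fintype.card α := by
  classical
  obtain ⟨N, hN⟩ : ∃ N : (Fin n → α) → (α → Fin (n+1)), ∀ w w', N w = N w' → auxEmp w = auxEmp w' := by
    refine ⟨fun w a => ⟨(Finset.univ.filter fun i => w i = a).card,
      Nat.lt_succ_of_le ((Finset.card_le_univ _).trans (by simp))⟩, ?_⟩
    intro w w' h
    funext a
    have := congrArg Fin.val (congrFun h a)
    simp only at this
    unfold auxEmp
    rw [Finset.sum_boole, Finset.sum_boole, this]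
  rw [← Finset.sum_fiberwise (s := Finset.univ) (g := N)]
  have : ∀ t : α → Fin (n+1), ∑ w ∈ Finset.univ.filter (fun w => N w = t), ∏ i, auxEmp w (w i) ≤ 1 := by
    intro t
    by_cases ht : ∃ w0, N w0 = t
    · obtain ⟨w0, h0⟩ := ht
      have hp := aux_emp_pmf hn w0
      calc _ = ∑ w ∈ Finset.univ.filter (fun w => N w = t), ∏ i, auxEmp w0 (w i) := by
            refine Finset.sum_congr rfl fun w hw => ?_
            have hw2 : N w = t := (Finset.mem_filter.1 hw).2
            rw [hN w w0 (hw2.trans h0.symm)]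
        _ ≤ ∑ w : Fin n → α, ∏ i, auxEmp w0 (w i) := Finset.sum_le_sum_of_subset_of_nonneg (Finset.filter_subset _ _)
            fun w _ _ => Finset.prod_nonneg fun i _ => hp.1 _
        _ = 1 := aux_pn_one _ hp.2 n
    · rw [Finset.filter_eq_empty_iff.2 (fun w _ h => ht ⟨w, h⟩)]; simp
  refine (Finset.sum_le_sum fun t _ => this t).trans (le_of_eq ?_)
  simp

lemma aux_prodQ {α : Type} [Fintype α] (Q : α → ℝ) (hQ : ∀ a, 0 < Q a) {n : ℕ} (hn : 0 < n) (w : Fin n → α) :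
    ∏ i, Q (w i) = (2:ℝ) ^ (-(n * klDiv2 (auxEmp w) Q)) * ∏ i, auxEmp w (w i) := by
  classical
  have hnR : (0:ℝ) < n := by exact_mod_cast hn
  have hpos : ∀ i, 0 < auxEmp w (w i) := by
    intro i
    refine div_pos ?_ hnR
    refine lt_of_lt_of_le one_pos (le_trans ?_ (Finset.single_le_sum (fun j _ => ?_) (Finset.mem_univ i)))
    · simp
    · split_ifs <;> norm_num
  have h1 : ∀ F : α → ℝ, ∑ i, F (w i) = n * ∑ a, auxEmp w a * F a := by
    intro F
    unfold auxEmp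
    rw [Finset.mul_sum]
    have : ∀ a, (n:ℝ) * ((∑ i, if w i = a then (1:ℝ) else 0) / n * F a) = ∑ i, if w i = a then F a else 0 := by
      intro a
      rw [← mul_assoc, mul_div_cancel₀ _ hnR.ne', Finset.sum_mul]
      simp
    simp only [this]
    rw [Finset.sum_comm]
    simp
  have hexp : (2:ℝ) ^ (-(n * klDiv2 (auxEmp w) Q)) = ∏ i, (Q (w i) / auxEmp w (w i)) := by
    rw [← Real.exp_log (show 0 < ∏ i, (Q (w i) / auxEmp w (w i)) from
      Finset.prod_pos fun i _ => div_pos (hQ _) (hpos i)), Real.log_prod (fun i _ => (div_pos (hQ _) (hpos i)).ne'),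
      Real.rpow_def_of_pos two_pos]
    congr 1
    have := aux_kl (auxEmp w) Q
    rw [h1 (fun a => Real.log (Q a / auxEmp w a))]
    have e : ∀ a, Real.log (Q a / auxEmp w a) = - Real.log (auxEmp w a / Q a) := fun a => by
      rw [← Real.log_inv, inv_div]
    simp only [e, mul_neg, Finset.sum_neg_distrib, this]
    ring
  rw [hexp, ← Finset.prod_mul_distrib]
  refine Finset.prod_congr rfl fun i _ => ?_
  have := hpos i
  field_simp

lemma aux_kl_nonneg {α : Type} [Fintype α] (p q : α → ℝ) (hp : IsPMF p) (hq : IsPMF q) (hq0 : ∀ a, 0 < q a) :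
    0 ≤ klDiv2 p q := by
  have h := aux_kl p q
  have h1 : 0 ≤ ∑ a, p a * Real.log (p a / q a) := by
    have : ∀ a, p a - q a ≤ p a * Real.log (p a / q a) := by
      intro a
      rcases (hp.1 a).eq_or_lt with h0 | h0
      · rw [← h0]; simpa using (hq0 a).le
      · have := Real.one_sub_inv_le_log_of_pos (div_pos h0 (hq0 a))
        have h2 := mul_le_mul_of_nonneg_left this h0.le
        refine le_trans (le_of_eq ?_) h2
        rw [inv_div]; field_simp
    have h2 := Finset.sum_le_sum fun a (_ : a ∈ Finset.univ) => this a
    rw [Finset.sum_sub_distrib, hp.2, hq.2, sub_self] at h2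
    exact h2
  rw [h] at h1
  exact nonneg_of_mul_nonneg_left h1 (Real.log_pos one_lt_two)

lemma aux_kl_cont {α : Type} [Fintype α] (q : α → ℝ) (hq0 : ∀ a, 0 < q a) :
    Continuous fun p : α → ℝ => klDiv2 p q := by
  unfold klDiv2
  refine continuous_finsetSum _ fun a _ => ?_
  have : (fun p : α → ℝ => p a * Real.logb 2 (p a / q a)) =
      fun p => q a / Real.log 2 * ((p a / q a) * Real.log (p a / q a)) := by
    funext p
    have := (hq0 a).ne'
    rw [Real.logb]; field_simp
  rw [this]
  have h1 : Continuous fun p : α → ℝ => p a / q a := (continuous_apply a).div_const _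
  exact continuous_const.mul (Real.continuous_mul_log.comp h1)

lemma aux_min_le {U V : Type} [Fintype U] [Fintype V] (P Q : U × V → ℝ) (hQ : IsPMF Q) (hQpos : ∀ p : U × V, 0 < Q p)
    (π : U × V → ℝ) (hπ : IsPMF π)
    (hπU : ∀ u, margU π u = margU P u) (hπV : ∀ v, margV π v = margV P v) :
    minDivMarg Q (margU P) (margV P) ≤ klDiv2 π Q := by
  refine csInf_le ⟨0, ?_⟩ ⟨π, hπ, hπU, hπV, rfl⟩
  rintro _ ⟨ρ, hρ, -, -, rfl⟩
  exact aux_kl_nonneg _ _ hρ hQ hQpos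

lemma aux_min_nonneg {U V : Type} [Fintype U] [Fintype V] (P Q : U × V → ℝ) (hQ : IsPMF Q) (hQpos : ∀ p : U × V, 0 < Q p) :
    0 ≤ minDivMarg Q (margU P) (margV P) := by
  refine Real.sInf_nonneg ?_
  rintro _ ⟨ρ, hρ, -, -, rfl⟩
  exact aux_kl_nonneg _ _ hρ hQ hQpos

lemma aux_compact {U V : Type} [Fintype U] [Fintype V] (P Q : U × V → ℝ) (hQ : IsPMF Q) (hQpos : ∀ p : U × V, 0 < Q p)
    (θ : ℝ) (hθ : θ < minDivMarg Q (margU P) (margV P)) :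
    ∃ δ : ℝ, 0 < δ ∧ ∀ π : U × V → ℝ, IsPMF π → (∀ u, |margU π u - margU P u| ≤ δ) →
      (∀ v, |margV π v - margV P v| ≤ δ) → θ ≤ klDiv2 π Q := by
  set K : Set (U × V → ℝ) := {π | IsPMF π ∧ klDiv2 π Q ≤ θ} with hK
  have hKc : IsCompact K := by
    have : K = stdSimplex ℝ (U × V) ∩ {π | klDiv2 π Q ≤ θ} := rfl
    rw [this]
    exact (isCompact_stdSimplex ℝ (U × V)).inter_right (isClosed_le (aux_kl_cont Q hQpos) continuous_const)
  set h : (U × V → ℝ) → ℝ := fun π => ∑ u, |margU π u - margU P u| + ∑ v, |margV π v - margV P v| with hh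
  have hhc : Continuous h := by
    simp only [hh, margU, margV]
    fun_prop
  have hpos : ∀ π ∈ K, 0 < h π := by
    intro π hπ
    by_contra hcon
    have s1 : 0 ≤ ∑ u, |margU π u - margU P u| := Finset.sum_nonneg fun _ _ => abs_nonneg _
    have s2 : 0 ≤ ∑ u, |margV π u - margV P u| := Finset.sum_nonneg fun _ _ => abs_nonneg _
    have z1 : ∑ u, |margU π u - margU P u| = 0 := by simp only [hh] at hcon; linarith
    have z2 : ∑ u, |margV π u - margV P u| = 0 := by simp only [hh] at hcon; linarith
    rw [Finset.sum_eq_zero_iff_of_nonneg (fun _ _ => abs_nonneg _)] at z1 z2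
    have := aux_min_le P Q hQ hQpos π hπ.1 (fun u => by simpa [sub_eq_zero] using z1 u)
      (fun u => by simpa [sub_eq_zero] using z2 u)
    linarith [hπ.2]
  obtain ⟨δ0, hδ0, hmin⟩ : ∃ δ0 : ℝ, 0 < δ0 ∧ ∀ π ∈ K, δ0 ≤ h π := by
    rcases K.eq_empty_or_nonempty with he | hne
    · exact ⟨1, one_pos, fun π hπ => by simp [he] at hπ⟩
    · obtain ⟨π0, h0, h1⟩ := hKc.exists_isMinOn hne hhc.continuousOn
      exact ⟨h π0, hpos π0 h0, fun π hπ => h1 hπ⟩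
  set C : ℝ := Fintype.card U + Fintype.card V + 1 with hC
  have hC0 : 0 < C := by positivity
  refine ⟨δ0 / C, by positivity, fun π hπ hu hv => ?_⟩
  by_contra hcon
  have h1 := hmin π ⟨hπ, (not_le.1 hcon).le⟩
  have h2 : h π ≤ Fintype.card U * (δ0 / C) + Fintype.card V * (δ0 / C) := by
    simp only [hh]
    refine add_le_add ((Finset.sum_le_sum fun u _ => hu u).trans (le_of_eq ?_)) ((Finset.sum_le_sum fun u _ => hv u).trans (le_of_eq ?_)) <;> simp
  have h3 : C * (δ0 / C) = δ0 := by field_simp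
  have h4 : 0 < δ0 / C := by positivity
  rw [hC] at h3
  nlinarith

lemma aux_ach {U V X Y : Type} [Fintype U] [Fintype V] [Fintype X] [Fintype Y]
    (P Q : U × V → ℝ) (hP : IsPMF P) (hQ : IsPMF Q) (hQpos : ∀ p : U × V, 0 < Q p)
    (Γ : X → Y → ℝ) (hΓ : ∀ x, IsPMF (Γ x))
    (x₀ x₁ : X) (ystar : Y)
    (h₀ : 0 < Γ x₀ ystar) (h₁ : Γ x₁ ystar = 0)
    (θ : ℝ) (hθ : θ < minDivMarg Q (margU P) (margV P)) :
    ∃ (k : ℕ → ℕ)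
      (f : ∀ n, (Fin n → U) → Fin (k n) → X)
      (g : ∀ n, (Fin n → V) → (Fin (k n) → Y) → Bool),
      Tendsto (fun n => (k n : ℝ)) atTop atTop ∧
      Tendsto (fun n => (k n : ℝ) / (n : ℝ)) atTop (nhds 0) ∧
      Tendsto (fun n : ℕ => decProb P Γ (f n) (g n) true) atTop (nhds 0) ∧
      ∀ᶠ n in atTop, decProb Q Γ (f n) (g n) false ≤ (2:ℝ) ^ (-(n * θ)) * ((n:ℝ) + 1) ^ Fintype.card (U × V) := by
  classical
  obtain ⟨δ, hδ, hcomp⟩ := aux_compact P Q hQ hQpos θ hθ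
  have hkt : Tendsto (fun n : ℕ => (Nat.sqrt n : ℝ)) atTop atTop := by
    refine tendsto_natCast_atTop_atTop.comp ?_
    refine tendsto_atTop_atTop.2 fun b => ⟨b * b, fun a ha => ?_⟩
    exact Nat.le_sqrt.2 ha
  refine ⟨Nat.sqrt, fun n u _ => if auxTyp (margU P) δ u then x₀ else x₁,
    fun n v y => if auxTyp (margV P) δ v ∧ ∃ j, y j = ystar then false else true, hkt, ?_, ?_, ?_⟩
  · refine squeeze_zero (fun n => by positivity) (fun n => ?_) (tendsto_inv_atTop_zero.comp hkt)
    rcases Nat.eq_zero_or_pos n with h | h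
    · subst h; simp
    · have hs : 0 < Nat.sqrt n := Nat.sqrt_pos.2 h
      have hsR : (0:ℝ) < Nat.sqrt n := by exact_mod_cast hs
      have hnR : (0:ℝ) < n := by exact_mod_cast h
      have : (Nat.sqrt n : ℝ) * Nat.sqrt n ≤ n := by exact_mod_cast Nat.sqrt_le n
      simp only [Function.comp]
      rw [div_le_iff₀ hnR, inv_mul_eq_div, le_div_iff₀ hsR]
      exact this
  · set q : ℝ := 1 - Γ x₀ ystar with hq
    have hq1 : q < 1 := by linarith
    have hq0 : 0 ≤ q := by
      have : Γ x₀ ystar ≤ 1 := by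
        rw [← (hΓ x₀).2]
        exact Finset.single_le_sum (fun y _ => (hΓ x₀).1 y) (Finset.mem_univ ystar)
      linarith
    have hlim : Tendsto (fun n : ℕ => (Fintype.card U / δ ^ 2) * (1 / (n:ℝ)) + (Fintype.card V / δ ^ 2) * (1 / (n:ℝ)) + q ^ Nat.sqrt n) atTop (nhds 0) := by
      have h1 := (tendsto_one_div_atTop_nhds_zero_nat (𝕜 := ℝ)).const_mul (Fintype.card U / δ ^ 2)
      have h2 := (tendsto_one_div_atTop_nhds_zero_nat (𝕜 := ℝ)).const_mul (Fintype.card V / δ ^ 2)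
      have h3 := (tendsto_pow_atTop_nhds_zero_of_lt_one hq0 hq1).comp (tendsto_natCast_atTop_iff.1 hkt)
      have := (h1.add h2).add h3
      simpa using this
    refine squeeze_zero' (Eventually.of_forall fun n => aux_nonneg P hP Γ hΓ _ _ _) ?_ hlim
    filter_upwards [eventually_gt_atTop 0] with n hn
    have hone : ∀ x : Fin (Nat.sqrt n) → X, ∑ y : Fin (Nat.sqrt n) → Y, ∏ j, Γ (x j) (y j) = 1 := by
      intro x
      rw [aux_prodsum (fun j b => Γ (x j) b)]
      simp [(hΓ _).2]
    have hno : ∑ y : Fin (Nat.sqrt n) → Y, (∏ j, Γ x₀ (y j)) * (if ∃ j, y j = ystar then 0 else 1) = q ^ Nat.sqrt n := by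
      have : ∀ y : Fin (Nat.sqrt n) → Y, (∏ j, Γ x₀ (y j)) * (if ∃ j, y j = ystar then (0:ℝ) else 1) =
          ∏ j, (Γ x₀ (y j) * if y j = ystar then 0 else 1) := by
        intro y
        rw [Finset.prod_mul_distrib]
        congr 1
        split_ifs with h
        · obtain ⟨j, hj⟩ := h
          exact (Finset.prod_eq_zero (Finset.mem_univ j) (by simp [hj])).symm
        · push Not at h
          exact (Finset.prod_eq_one fun j _ => by simp [h j]).symm
      simp only [this]
      rw [aux_prodsum (fun _ b => Γ x₀ b * if b = ystar then 0 else 1)]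
      have e : ∑ b, (Γ x₀ b * if b = ystar then (0:ℝ) else 1) = q := by
        have : ∀ b, (Γ x₀ b * if b = ystar then (0:ℝ) else 1) = Γ x₀ b - if b = ystar then Γ x₀ b else 0 := by
          intro b; split_ifs <;> simp
        simp only [this, Finset.sum_sub_distrib, (hΓ x₀).2]
        simp [hq]
      rw [Finset.prod_congr rfl (fun _ _ => e)]; simp
    have hin : ∀ (u : Fin n → U) (v : Fin n → V),
        ∑ y : Fin (Nat.sqrt n) → Y, (∏ j, Γ (if auxTyp (margU P) δ u then x₀ else x₁) (y j)) *
          (if (if auxTyp (margV P) δ v ∧ ∃ j, y j = ystar then false else true) = true then (1:ℝ) else 0) ≤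
        (if auxTyp (margU P) δ u then 0 else 1) + (if auxTyp (margV P) δ v then 0 else 1) + q ^ Nat.sqrt n := by
      intro u v
      have hq' : 0 ≤ q ^ Nat.sqrt n := pow_nonneg hq0 _
      have htriv : ∑ y : Fin (Nat.sqrt n) → Y, (∏ j, Γ (if auxTyp (margU P) δ u then x₀ else x₁) (y j)) *
          (if (if auxTyp (margV P) δ v ∧ ∃ j, y j = ystar then false else true) = true then (1:ℝ) else 0) ≤ 1 := by
        refine le_of_le_of_eq ?_ (hone fun _ => if auxTyp (margU P) δ u then x₀ else x₁)
        refine Finset.sum_le_sum fun y _ => mul_le_of_le_one_right (Finset.prod_nonneg fun j _ => (hΓ _).1 _) ?_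
        split_ifs <;> norm_num
      by_cases hu : auxTyp (margU P) δ u
      · by_cases hv : auxTyp (margV P) δ v
        · simp only [hu, hv, if_true, true_and, zero_add]
          rw [← hno]
          refine Finset.sum_le_sum fun y _ => ?_
          by_cases hy : ∃ j, y j = ystar <;> simp [hy]
        · rw [if_pos hu] at htriv ⊢
          rw [if_pos hu, if_neg hv]
          linarith
      · rw [if_neg hu] at htriv ⊢
        have : (0:ℝ) ≤ if auxTyp (margV P) δ v then 0 else 1 := by split_ifs <;> norm_num
        rw [if_neg hu]
        linarith
    have hPn : ∀ (u : Fin n → U) (v : Fin n → V), 0 ≤ ∏ i : Fin n, P (u i, v i) := fun u v => Finset.prod_nonneg fun i _ => hP.1 _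
    calc _ = ∑ u : Fin n → U, ∑ v : Fin n → V, (∏ i, P (u i, v i)) * ∑ y : Fin (Nat.sqrt n) → Y, (∏ j, Γ (if auxTyp (margU P) δ u then x₀ else x₁) (y j)) *
          (if (if auxTyp (margV P) δ v ∧ ∃ j, y j = ystar then false else true) = true then (1:ℝ) else 0) := by
          unfold decProb
          simp only [Finset.mul_sum, mul_assoc]
      _ ≤ ∑ u : Fin n → U, ∑ v : Fin n → V, (∏ i, P (u i, v i)) * ((if auxTyp (margU P) δ u then 0 else 1) + (if auxTyp (margV P) δ v then 0 else 1) + q ^ Nat.sqrt n) :=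
          Finset.sum_le_sum fun u _ => Finset.sum_le_sum fun v _ => mul_le_mul_of_nonneg_left (hin u v) (hPn u v)
      _ = ∑ u, (∏ i, margU P (u i)) * (if auxTyp (margU P) δ u then 0 else 1)
          + ∑ v, (∏ i, margV P (v i)) * (if auxTyp (margV P) δ v then 0 else 1) + q ^ Nat.sqrt n := by
          simp only [mul_add, Finset.sum_add_distrib]
          rw [aux_margU_sum P (fun u => if auxTyp (margU P) δ u then 0 else 1),
            aux_margV_sum P (fun v => if auxTyp (margV P) δ v then 0 else 1),
            aux_margU_sum P (fun _ => q ^ Nat.sqrt n), ← Finset.sum_mul,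
            aux_pn_one _ (aux_margU_pmf hP).2, one_mul]
      _ ≤ _ := by
          gcongr
          · exact aux_cheb _ (aux_margU_pmf hP) δ hδ n hn
          · exact aux_cheb _ (aux_margV_pmf hP) δ hδ n hn
  · filter_upwards [eventually_gt_atTop 0] with n hn
    have hone : ∀ x : Fin (Nat.sqrt n) → X, ∑ y : Fin (Nat.sqrt n) → Y, ∏ j, Γ (x j) (y j) = 1 := by
      intro x
      rw [aux_prodsum (fun j b => Γ (x j) b)]
      simp [(hΓ _).2]
    have hin : ∀ (u : Fin n → U) (v : Fin n → V),
        ∑ y : Fin (Nat.sqrt n) → Y, (∏ j, Γ (if auxTyp (margU P) δ u then x₀ else x₁) (y j)) *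
          (if (if auxTyp (margV P) δ v ∧ ∃ j, y j = ystar then false else true) = false then (1:ℝ) else 0) ≤
        if auxTyp (margU P) δ u ∧ auxTyp (margV P) δ v then 1 else 0 := by
      intro u v
      by_cases hv : auxTyp (margV P) δ v
      · by_cases hu : auxTyp (margU P) δ u
        · rw [if_pos (⟨hu, hv⟩ : auxTyp (margU P) δ u ∧ auxTyp (margV P) δ v)]
          refine le_of_le_of_eq ?_ (hone fun _ => if auxTyp (margU P) δ u then x₀ else x₁)
          refine Finset.sum_le_sum fun y _ => mul_le_of_le_one_right (Finset.prod_nonneg fun j _ => (hΓ _).1 _) ?_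
          split_ifs <;> norm_num
        · simp only [hu, hv, if_false, false_and, true_and]
          refine le_of_eq (Finset.sum_eq_zero fun y _ => ?_)
          by_cases hy : ∃ j, y j = ystar
          · obtain ⟨j, hj⟩ := hy
            rw [Finset.prod_eq_zero (Finset.mem_univ j) (by rw [hj, h₁]), zero_mul]
          · simp [hy]
      · simp [hv]
    have hQn : ∀ (u : Fin n → U) (v : Fin n → V), 0 ≤ ∏ i : Fin n, Q (u i, v i) := fun u v => Finset.prod_nonneg fun i _ => hQ.1 _
    have hpt : ∀ (u : Fin n → U) (v : Fin n → V), (∏ i, Q (u i, v i)) * (if auxTyp (margU P) δ u ∧ auxTyp (margV P) δ v then 1 else 0)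
        ≤ (2:ℝ) ^ (-(n * θ)) * ∏ i, auxEmp (fun i => (u i, v i)) (u i, v i) := by
      intro u v
      have hemp := aux_emp_pmf hn (fun i => (u i, v i))
      have hprod : 0 ≤ ∏ i, auxEmp (fun i => (u i, v i)) (u i, v i) := Finset.prod_nonneg fun i _ => hemp.1 _
      split_ifs with h
      · rw [mul_one, aux_prodQ Q hQpos hn (fun i => (u i, v i))]
        refine mul_le_mul_of_nonneg_right ?_ hprod
        refine Real.rpow_le_rpow_of_exponent_le one_le_two ?_
        have := hcomp _ hemp (fun a => by rw [aux_emp_margU]; exact h.1 a) (fun a => by rw [aux_emp_margV]; exact h.2 a)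
        have hnR : (0:ℝ) ≤ n := Nat.cast_nonneg n
        nlinarith
      · rw [mul_zero]; positivity
    calc _ = ∑ u : Fin n → U, ∑ v : Fin n → V, (∏ i, Q (u i, v i)) * ∑ y : Fin (Nat.sqrt n) → Y, (∏ j, Γ (if auxTyp (margU P) δ u then x₀ else x₁) (y j)) *
          (if (if auxTyp (margV P) δ v ∧ ∃ j, y j = ystar then false else true) = false then (1:ℝ) else 0) := by
          unfold decProb
          simp only [Finset.mul_sum, mul_assoc]
      _ ≤ ∑ u : Fin n → U, ∑ v : Fin n → V, (2:ℝ) ^ (-(n * θ)) * ∏ i, auxEmp (fun i => (u i, v i)) (u i, v i) :=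
          Finset.sum_le_sum fun u _ => Finset.sum_le_sum fun v _ =>
            (mul_le_mul_of_nonneg_left (hin u v) (hQn u v)).trans (hpt u v)
      _ = (2:ℝ) ^ (-(n * θ)) * ∑ w : Fin n → U × V, ∏ i, auxEmp w (w i) := by
          simp only [← Finset.mul_sum]
          congr 1
          rw [← (Equiv.arrowProdEquivProdArrow (Fin n) (fun _ => U) (fun _ => V)).symm.sum_comp, Fintype.sum_prod_type]
          rfl
      _ ≤ _ := mul_le_mul_of_nonneg_left (aux_types hn) (by positivity)

/-- If the DMC admits inputs `x₀, x₁` and an output `y*` with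
`Γ(y*|x₀) > 0` and `Γ(y*|x₁) = 0`, then for every `ε ∈ [0,1)` the Stein-exponent
with a sublinear number of channel uses equals
`min { D(π_{UV} ‖ Q_{UV}) : π_U = P_U, π_V = P_V }`. -/
theorem stein_sublinear_partially_connected
    {U V X Y : Type} [Fintype U] [Fintype V] [Fintype X] [Fintype Y]
    (P Q : U × V → ℝ) (hP : IsPMF P) (hQ : IsPMF Q) (hQpos : ∀ p : U × V, 0 < Q p)
    (Γ : X → Y → ℝ) (hΓ : ∀ x, IsPMF (Γ x))
    (x₀ x₁ : X) (ystar : Y)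
    (h₀ : 0 < Γ x₀ ystar) (h₁ : Γ x₁ ystar = 0)
    (ε : ℝ) (hε0 : 0 ≤ ε) (hε1 : ε < 1) :
    sSup (steinSetSublin P Q Γ ε) = minDivMarg Q (margU P) (margV P) := by
  haveI : Nonempty Y := ⟨ystar⟩
  set m := minDivMarg Q (margU P) (margV P) with hm
  have hub : ∀ θ ∈ steinSetSublin P Q Γ ε, θ ≤ m := by
    rintro θ ⟨hθ, k, f, g, hk1, hk2, hα, hβ⟩
    refine le_csInf ⟨_, P, hP, fun _ => rfl, fun _ => rfl, rfl⟩ ?_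
    rintro _ ⟨π, hπ, hπU, hπV, rfl⟩
    refine le_of_forall_gt_imp_ge_of_dense fun d hd => ?_
    have hα' : ∀ᶠ n in atTop, decProb P Γ (f n) (g n) true ≤ 1 - (1 - ε) / 2 := by
      have hb : IsBoundedUnder (· ≤ ·) atTop (fun n : ℕ => decProb P Γ (f n) (g n) true) :=
        isBoundedUnder_of ⟨1, fun n => by
          have := aux_total P hP Γ hΓ (f n) (g n)
          have := aux_nonneg P hP Γ hΓ (f n) (g n) false
          linarith⟩
      refine (eventually_lt_of_limsup_lt (b := 1 - (1 - ε) / 2) ?_ hb).mono fun n hn => hn.le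
      linarith
    have hc := aux_conv P Q hP hQpos Γ hΓ π hπ hπU hπV d hd k f g hk2 ((1 - ε) / 2) (by linarith) hα'
    refine hβ.trans (liminf_le_of_frequently_le (hc.mono fun n hn => hn.2).frequently ?_)
    refine isBoundedUnder_of ⟨0, fun n => ?_⟩
    have h1 := aux_total Q hQ Γ hΓ (f n) (g n)
    have h2 := aux_nonneg Q hQ Γ hΓ (f n) (g n) true
    have h3 := aux_nonneg Q hQ Γ hΓ (f n) (g n) false
    have h4 : Real.logb 2 (decProb Q Γ (f n) (g n) false) ≤ 0 := Real.logb_nonpos one_lt_two h3 (by linarith)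
    have h5 : (0:ℝ) ≤ 1 / n := by positivity
    show (0:ℝ) ≤ _
    nlinarith
  have hm0 : 0 ≤ m := aux_min_nonneg P Q hQ hQpos
  have hach : ∀ θ, 0 < θ → θ < m → θ ∈ steinSetSublin P Q Γ ε := by
    intro θ hθ0 hθ
    obtain ⟨θ', ht1, ht2⟩ := exists_between hθ
    obtain ⟨k, f, g, hk1, hk2, hα, hβ⟩ := aux_ach P Q hP hQ hQpos Γ hΓ x₀ x₁ ystar h₀ h₁ θ' ht2
    refine ⟨hθ0, k, f, g, hk1, hk2, by rw [hα.limsup_eq]; exact hε0, ?_⟩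
    have hc := aux_conv P Q hP hQpos Γ hΓ P hP (fun _ => rfl) (fun _ => rfl) (klDiv2 P Q + 1) (by linarith)
      k f g hk2 (1/2) (by norm_num) ((hα.eventually (gt_mem_nhds (by norm_num : (0:ℝ) < 1 - 1/2))).mono fun n hn => hn.le)
    have hpoly : Tendsto (fun n : ℕ => θ' - Fintype.card (U × V) * (Real.logb 2 ((n:ℝ) + 1) / n)) atTop (nhds θ') := by
      have h1 : Tendsto (fun n : ℕ => Real.logb 2 ((n:ℝ) + 1) / n) atTop (nhds 0) := by
        have h2 : Tendsto (fun x : ℝ => Real.log (x + 1) / x) atTop (nhds 0) := by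
          have h3 := (Real.tendsto_pow_log_div_mul_add_atTop 1 (-1) 1 one_ne_zero).comp (tendsto_atTop_add_const_right atTop (1:ℝ) tendsto_id)
          refine h3.congr fun x => ?_
          simp
        have h4 := (h2.comp tendsto_natCast_atTop_atTop).div_const (Real.log 2)
        rw [zero_div] at h4
        refine h4.congr fun n => ?_
        simp only [Function.comp, Real.logb]
        ring
      have := (tendsto_const_nhds (x := θ')).sub (h1.const_mul (Fintype.card (U × V) : ℝ))
      simpa using this
    refine le_liminf_of_le ?_ ?_
    · exact IsBoundedUnder.isCoboundedUnder_ge ⟨klDiv2 P Q + 1, (eventually_map.2 (hc.mono fun n hn => hn.2))⟩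
    · filter_upwards [hc, hβ, hpoly.eventually (lt_mem_nhds ht1), eventually_gt_atTop 0] with n h1 h2 h3 hn
      have hnR : (0:ℝ) < n := by exact_mod_cast hn
      refine h3.le.trans ?_
      have hlog := Real.logb_le_logb_of_le one_lt_two h1.1 h2
      rw [Real.logb_mul (by positivity) (by positivity), Real.logb_rpow two_pos (by norm_num), Real.logb_pow] at hlog
      rw [neg_mul, le_neg, one_div_mul_eq_div, div_le_iff₀ hnR]
      refine hlog.trans (le_of_eq ?_)
      field_simp
      ring
  rcases hm0.eq_or_lt with h | h
  · have : steinSetSublin P Q Γ ε = ∅ := by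
      refine Set.eq_empty_of_forall_notMem fun θ hθ => ?_
      have := hub θ hθ
      have := hθ.1
      linarith
    rw [this, Real.sSup_empty, ← h]
  · refine csSup_eq_of_forall_le_of_forall_lt_exists_gt ⟨m / 2, hach _ (by linarith) (by linarith)⟩ hub ?_
    intro w hw
    obtain ⟨z, hz1, hz2⟩ := exists_between (max_lt hw h)
    exact ⟨z, hach z ((le_max_right _ _).trans_lt hz1) hz2, (le_max_left _ _).trans_lt hz1⟩
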